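/- If ν is a place of L with ν(y − a) > 0, then ν(x − a) = 1 and ν(y − a) = m; that is, the place Q of L given by a zero of y − a is unramified over the place P_{x−a} of K(x) and has ramification index m = q + 1 over the place P_{y−a} of K(y). -/

import Mathlib

open Polynomial

/-! Put `u = y - a`, `t = x - a` and `e = (u ^ q + b) * g(x)`, so that `u * e = t ^ (q + 1)`. Since
`b ≠ 0` and `ν u > 0`, the factor `u ^ q + b` has value `0`; the bound on `deg g` then forces
`ν t > 0`, so `ν e = 0`. Hence `t` generates the ideal `(t, u)` of `K[x, y]` after inverting `e`: an
element of `K[x, y]` of positive value becomes, up to the factor `e`, `t` times another element of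
`K[x, y]`. By descent `ν t` divides every value on `K[x, y]`, hence every value on its fraction
field `L`, and surjectivity of `ν` gives `ν t = 1`. -/

/-- The valuation `ν` vanishes on the nonzero constants from `K`; the additive counterpart of
`Valuation.IsTrivialOn`. -/
def IsTrivialOnConstants (K : Type*) {A Γ₀ : Type*} [CommRing K] [CommRing A] [Algebra K A]
    [LinearOrderedAddCommMonoidWithTop Γ₀] (ν : AddValuation A Γ₀) : Prop :=
  ∀ c : K, c ≠ 0 → ν (algebraMap K A c) = 0

/-- The element `z` is congruent to a constant from `K` modulo the ideal generated by `t` in the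
localization of `R` at `e`, where a single factor `e` clears the denominator. -/
def IsConstMod {K A : Type*} [CommRing K] [CommRing A] [Algebra K A] (R : Subalgebra K A)
    (e t z : A) : Prop :=
  ∃ c : K, ∃ w ∈ R, e * (z - algebraMap K A c) = t * w

lemma IsConstMod.of_mem_adjoin {K A : Type*} [CommRing K] [CommRing A] [Algebra K A] {S : Set A}
    {e t z : A} (hS : ∀ s ∈ S, IsConstMod (Algebra.adjoin K S) e t s)
    (hz : z ∈ Algebra.adjoin K S) : IsConstMod (Algebra.adjoin K S) e t z := by
  induction hz using Algebra.adjoin_induction with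
  | mem s hs => exact hS s hs
  | algebraMap c => exact ⟨c, 0, zero_mem _, by simp⟩
  | add z₁ z₂ _ _ ih₁ ih₂ =>
    obtain ⟨c₁, w₁, hw₁, h₁⟩ := ih₁
    obtain ⟨c₂, w₂, hw₂, h₂⟩ := ih₂
    refine ⟨c₁ + c₂, w₁ + w₂, add_mem hw₁ hw₂, ?_⟩
    rw [map_add]
    linear_combination h₁ + h₂
  | mul z₁ z₂ _ hz₂ ih₁ ih₂ =>
    obtain ⟨c₁, w₁, hw₁, h₁⟩ := ih₁
    obtain ⟨c₂, w₂, hw₂, h₂⟩ := ih₂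
    refine ⟨c₁ * c₂, w₁ * z₂ + algebraMap K A c₁ * w₂,
      add_mem (mul_mem hw₁ hz₂) (mul_mem (algebraMap_mem _ c₁) hw₂), ?_⟩
    rw [map_mul]
    linear_combination z₂ * h₁ + algebraMap K A c₁ * h₂

lemma IsConstMod.of_mul_eq_mul {K A : Type*} [CommRing K] [CommRing A] [Algebra K A] {x y e w : A}
    {a c : K} (he : e ∈ Algebra.adjoin K {x, y}) (hw : w ∈ Algebra.adjoin K {x, y})
    (h : (y - algebraMap K A c) * e = (x - algebraMap K A a) * w) {z : A}
    (hz : z ∈ ({x, y} : Set A)) :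
    IsConstMod (Algebra.adjoin K {x, y}) e (x - algebraMap K A a) z := by
  obtain rfl | rfl := hz
  · exact ⟨a, e, he, mul_comm _ _⟩
  · exact ⟨c, w, hw, (mul_comm _ _).trans h⟩

namespace IsTrivialOnConstants

section Ring

variable {K A Γ₀ : Type*} [CommRing K] [CommRing A] [Algebra K A]
  [LinearOrderedAddCommMonoidWithTop Γ₀] {ν : AddValuation A Γ₀}

lemma map_algebraMap_nonneg (hν : IsTrivialOnConstants K ν) (c : K) :
    0 ≤ ν (algebraMap K A c) := by
  obtain rfl | hc := eq_or_ne c 0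
  · simp
  · exact (hν c hc).ge

lemma map_nonneg_of_mem_adjoin (hν : IsTrivialOnConstants K ν) {S : Set A}
    (hS : ∀ s ∈ S, 0 ≤ ν s) {z : A} (hz : z ∈ Algebra.adjoin K S) : 0 ≤ ν z := by
  induction hz using Algebra.adjoin_induction with
  | mem s hs => exact hS s hs
  | algebraMap c => exact hν.map_algebraMap_nonneg c
  | add z w _ _ hz hw => exact ν.map_le_add hz hw
  | mul z w _ _ hz hw => exact (add_nonneg hz hw).trans_eq (ν.map_mul z w).symm

lemma map_nonneg_of_map_sub_nonneg (hν : IsTrivialOnConstants K ν) {x : A} {a : K}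
    (hx : 0 ≤ ν (x - algebraMap K A a)) : 0 ≤ ν x := by
  simpa only [sub_add_cancel] using ν.map_le_add hx (hν.map_algebraMap_nonneg a)

lemma map_eq_zero_of_map_sub_pos (hν : IsTrivialOnConstants K ν) {z : A} {c : K} (hc : c ≠ 0)
    (hz : 0 < ν (z - algebraMap K A c)) : ν z = 0 := by
  rw [ν.map_eq_of_lt_sub ((hν c hc).trans_lt hz), hν c hc]

lemma map_aeval_eq_zero (hν : IsTrivialOnConstants K ν) {x : A} {a : K}
    (hx : 0 < ν (x - algebraMap K A a)) {P : K[X]} (hP : P.eval a ≠ 0) :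
    ν (aeval x P) = 0 := by
  obtain ⟨Q, hQ⟩ := X_sub_C_dvd_sub_C_eval (a := a) (p := P)
  have hQx : aeval x P - algebraMap K A (P.eval a) = (x - algebraMap K A a) * aeval x Q := by
    simpa using congrArg (aeval x) hQ
  have hQ_nonneg : 0 ≤ ν (aeval x Q) :=
    hν.map_nonneg_of_mem_adjoin (by simpa using hν.map_nonneg_of_map_sub_nonneg hx.le)
      (aeval_mem_adjoin_singleton K x)
  refine hν.map_eq_zero_of_map_sub_pos hP ?_
  rw [hQx, ν.map_mul]
  exact add_pos_of_pos_of_nonneg hx hQ_nonneg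

lemma natDegree_nsmul_le_map_aeval (hν : IsTrivialOnConstants K ν) {x : A} (hx : ν x ≤ 0)
    (P : K[X]) : P.natDegree • ν x ≤ ν (aeval x P) := by
  rw [aeval_eq_sum_range]
  refine ν.map_le_sum fun i hi => ?_
  rw [Algebra.smul_def, ν.map_mul, ν.map_pow]
  exact (nsmul_le_nsmul_left_of_nonpos hx (Finset.mem_range_succ_iff.1 hi)).trans
    (le_add_of_nonneg_left (hν.map_algebraMap_nonneg _))

lemma natDegree_nsmul_map_sub_le_map_aeval (hν : IsTrivialOnConstants K ν) {x : A} {a : K}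
    (hx : ν (x - algebraMap K A a) ≤ 0) (P : K[X]) :
    P.natDegree • ν (x - algebraMap K A a) ≤ ν (aeval x P) := by
  have h := hν.natDegree_nsmul_le_map_aeval hx (taylor a P)
  rwa [natDegree_taylor, taylor_apply, aeval_comp, map_add, aeval_X, aeval_C, sub_add_cancel] at h

end Ring

section Integer

variable {K L : Type*} [Field K] [Field L] [Algebra K L] {ν : AddValuation L (WithTop ℤ)}

lemma map_sub_pos_of_add_eq_nsmul (hν : IsTrivialOnConstants K ν) {x u : L} {a : K} {P : K[X]}
    {n : ℕ} (hP : P.natDegree ≤ n) (hu : 0 < ν u)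
    (h : ν u + ν (aeval x P) = n • ν (x - algebraMap K L a)) :
    0 < ν (x - algebraMap K L a) := by
  by_contra! hx
  set d := P.natDegree • ν (x - algebraMap K L a)
  have hd : d ≠ ⊤ := ((nsmul_nonpos hx _).trans_lt (WithTop.coe_lt_top 0)).ne
  apply lt_irrefl d
  calc d = 0 + d := (zero_add d).symm
    _ < ν u + d := WithTop.add_lt_add_right hd hu
    _ ≤ ν u + ν (aeval x P) := by gcongr; exact hν.natDegree_nsmul_map_sub_le_map_aeval hx P
    _ = n • ν (x - algebraMap K L a) := h
    _ ≤ d := nsmul_le_nsmul_left_of_nonpos hx hP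

variable {S : Set L} {e t z : L} {s i : ℤ}

lemma dvd_of_mem_adjoin (hν : IsTrivialOnConstants K ν) (hS_nonneg : ∀ w ∈ S, 0 ≤ ν w)
    (hS : ∀ w ∈ S, IsConstMod (Algebra.adjoin K S) e t w) (he : ν e = 0) (ht : ν t = s)
    (hs : 0 < s) (hz : z ∈ Algebra.adjoin K S) (hi : ν z = i) : s ∣ i := by
  lift i to ℕ using by exact_mod_cast hi ▸ hν.map_nonneg_of_mem_adjoin hS_nonneg hz
  induction i using Nat.strong_induction_on generalizing z with
  | _ i ih =>
  obtain ⟨c, w, hw, hzw⟩ := IsConstMod.of_mem_adjoin hS hz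
  have hw_nonneg : 0 ≤ ν w := hν.map_nonneg_of_mem_adjoin hS_nonneg hw
  have hsub : ν (z - algebraMap K L c) = s + ν w := by
    simpa only [ν.map_mul, he, ht, zero_add] using congrArg ν hzw
  obtain rfl | hc := eq_or_ne c 0
  · rw [map_zero, sub_zero, hi] at hsub
    obtain ⟨j, hj⟩ : ∃ j : ℤ, j = ν w := WithTop.ne_top_iff_exists.1 fun h => by simp [h] at hsub
    rw [← hj] at hw_nonneg hsub
    lift j to ℕ using by exact_mod_cast hw_nonneg
    have hij : (i : ℤ) = s + j := by exact_mod_cast hsub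
    rw [hij]
    exact (dvd_refl s).add (ih j (by lia) hw hj.symm)
  · have hpos : 0 < ν (z - algebraMap K L c) := by
      rw [hsub]
      exact add_pos_of_pos_of_nonneg (by exact_mod_cast hs) hw_nonneg
    have hi0 : (i : ℤ) = 0 := by
      exact_mod_cast hi.symm.trans (hν.map_eq_zero_of_map_sub_pos hc hpos)
    exact hi0 ▸ dvd_zero s

lemma dvd_of_adjoin_eq_top (hν : IsTrivialOnConstants K ν) (hS_nonneg : ∀ w ∈ S, 0 ≤ ν w)
    (hS : ∀ w ∈ S, IsConstMod (Algebra.adjoin K S) e t w) (he : ν e = 0) (ht : ν t = s)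
    (hs : 0 < s) (htop : IntermediateField.adjoin K S = ⊤) (hi : ν z = i) : s ∣ i := by
  have hz : z ∈ IntermediateField.adjoin K S := htop ▸ IntermediateField.mem_top
  obtain ⟨r, hr, d, hd, rfl⟩ := IntermediateField.mem_adjoin_iff_div.1 hz
  have hrd : r / d ≠ 0 := ν.ne_top_iff.1 (hi ▸ WithTop.coe_ne_top)
  have hd0 : d ≠ 0 := fun h => hrd (by rw [h, div_zero])
  obtain ⟨j, hj⟩ := WithTop.ne_top_iff_exists.1 (ν.ne_top_iff.2 hd0)
  have hr_val : ν r = ((i + j : ℤ) : WithTop ℤ) := by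
    rw [← div_mul_cancel₀ r hd0, ν.map_mul, hi, ← hj, WithTop.coe_add]
  exact (Int.dvd_add_left (hν.dvd_of_mem_adjoin hS_nonneg hS he ht hs hd hj.symm)).1
    (hν.dvd_of_mem_adjoin hS_nonneg hS he ht hs hr hr_val)

lemma map_eq_one_of_surjective (hν : IsTrivialOnConstants K ν) (hsurj : Function.Surjective ν)
    (hS_nonneg : ∀ w ∈ S, 0 ≤ ν w) (hS : ∀ w ∈ S, IsConstMod (Algebra.adjoin K S) e t w)
    (he : ν e = 0) (ht0 : t ≠ 0) (ht : 0 < ν t) (htop : IntermediateField.adjoin K S = ⊤) :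
    ν t = ((1 : ℤ) : WithTop ℤ) := by
  obtain ⟨s, hs⟩ := WithTop.ne_top_iff_exists.1 (ν.ne_top_iff.2 ht0)
  have hs_pos : 0 < s := by exact_mod_cast hs ▸ ht
  obtain ⟨z, hz⟩ := hsurj ((1 : ℤ) : WithTop ℤ)
  have hdvd : s ∣ 1 := hν.dvd_of_adjoin_eq_top hS_nonneg hS he hs.symm hs_pos htop hz
  rw [← hs, Int.eq_one_of_dvd_one hs_pos.le hdvd]

end Integer

end IsTrivialOnConstants

lemma adjoin_image_union_eq_top {F E L : Type*} [Field F] [Field E] [Field L] [Algebra F E]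
    [Algebra E L] [Algebra F L] [IsScalarTower F E L] {S : Set E} {T : Set L}
    (hS : IntermediateField.adjoin F S = ⊤) (hT : IntermediateField.adjoin E T = ⊤) :
    IntermediateField.adjoin F (algebraMap E L '' S ∪ T) = ⊤ := by
  set M := IntermediateField.adjoin F (algebraMap E L '' S ∪ T)
  have hSM : IntermediateField.adjoin F S ≤ M.comap (IsScalarTower.toAlgHom F E L) :=
    IntermediateField.adjoin_le_iff.2 fun z hz =>
      IntermediateField.subset_adjoin F _ (.inl ⟨z, hz, rfl⟩)
  have hEM (z : E) : algebraMap E L z ∈ M := hSM (hS ▸ trivial)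
  have hTM : IntermediateField.adjoin E T ≤ M.toSubfield.toIntermediateField hEM :=
    IntermediateField.adjoin_le_iff.2 fun z hz => IntermediateField.subset_adjoin F _ (.inr hz)
  exact eq_top_iff.2 fun z _ => hTM (hT ▸ trivial)

theorem IsTrivialOnConstants.map_sub_eq_of_mul_eq_pow {K L : Type*} [Field K] [Field L]
    [Algebra K L] {ν : AddValuation L (WithTop ℤ)} (hν : IsTrivialOnConstants K ν)
    (hsurj : Function.Surjective ν) {x y : L} (htop : IntermediateField.adjoin K {x, y} = ⊤)
    {a c : K} {g h : K[X]} {n : ℕ} (hga : g.eval a ≠ 0) (hgdeg : g.natDegree ≤ n)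
    (hhc : h.eval c ≠ 0) (hx : x ≠ algebraMap K L a)
    (hy : 0 < ν (y - algebraMap K L c))
    (hcurve : (y - algebraMap K L c) * (aeval y h * aeval x g) = (x - algebraMap K L a) ^ n) :
    ν (x - algebraMap K L a) = ((1 : ℤ) : WithTop ℤ) ∧
      ν (y - algebraMap K L c) = ((n : ℤ) : WithTop ℤ) := by
  have hhy : ν (aeval y h) = 0 := hν.map_aeval_eq_zero hy hhc
  have hval : ν (y - algebraMap K L c) + ν (aeval x g) = n • ν (x - algebraMap K L a) := by
    simpa only [ν.map_mul, ν.map_pow, hhy, zero_add] using congrArg ν hcurve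
  have hx_pos : 0 < ν (x - algebraMap K L a) := hν.map_sub_pos_of_add_eq_nsmul hgdeg hy hval
  have hgx : ν (aeval x g) = 0 := hν.map_aeval_eq_zero hx_pos hga
  rw [hgx, add_zero] at hval
  have hn : n ≠ 0 := by
    rintro rfl
    exact hy.ne' (hval.trans (zero_nsmul _))
  have hS_nonneg : ∀ z ∈ ({x, y} : Set L), 0 ≤ ν z := by
    rintro z (rfl | rfl)
    exacts [hν.map_nonneg_of_map_sub_nonneg hx_pos.le, hν.map_nonneg_of_map_sub_nonneg hy.le]
  have hxR : x ∈ Algebra.adjoin K {x, y} := Algebra.subset_adjoin (.inl rfl)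
  have haeval {z : L} (hz : z ∈ ({x, y} : Set L)) (f : K[X]) :
      aeval z f ∈ Algebra.adjoin K {x, y} :=
    Algebra.adjoin_mono (Set.singleton_subset_iff.2 hz) (aeval_mem_adjoin_singleton K z)
  have hS (z : L) (hz : z ∈ ({x, y} : Set L)) : IsConstMod (Algebra.adjoin K {x, y})
      (aeval y h * aeval x g) (x - algebraMap K L a) z :=
    .of_mul_eq_mul (mul_mem (haeval (.inr rfl) h) (haeval (.inl rfl) g))
      (pow_mem (sub_mem hxR (algebraMap_mem _ a)) (n - 1))
      (hcurve.trans (mul_pow_sub_one hn _).symm) hz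
  have hx_one : ν (x - algebraMap K L a) = ((1 : ℤ) : WithTop ℤ) :=
    hν.map_eq_one_of_surjective hsurj hS_nonneg hS (by rw [ν.map_mul, hhy, hgx, add_zero])
      (sub_ne_zero.2 hx) hx_pos htop
  refine ⟨hx_one, ?_⟩
  rw [hval, hx_one, ← WithTop.coe_nsmul, nsmul_one]

theorem ramification_at_Q_general {K : Type*} [Field K] {q n : ℕ} (hq : q ≠ 0)
    {a b c : K} (hb : b ≠ 0) {g : K[X]} (hga : g.eval a ≠ 0) (hgdeg : g.natDegree ≤ n)
    {L : Type*} [Field L] [Algebra (RatFunc K) L]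
    {y : L} (hgen : Algebra.adjoin (RatFunc K) {y} = ⊤)
    (heq : (y - algebraMap (RatFunc K) L (RatFunc.C c)) ^ (q + 1)
        + algebraMap (RatFunc K) L (RatFunc.C b) * (y - algebraMap (RatFunc K) L (RatFunc.C c))
        = algebraMap (RatFunc K) L
            ((RatFunc.X - RatFunc.C a) ^ n / algebraMap K[X] (RatFunc K) g))
    {ν : AddValuation L (WithTop ℤ)} (hsurj : Function.Surjective ν)
    (htriv : ∀ c : K, c ≠ 0 → ν (algebraMap (RatFunc K) L (RatFunc.C c)) = 0)
    (hy : 0 < ν (y - algebraMap (RatFunc K) L (RatFunc.C c))) :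
    ν (algebraMap (RatFunc K) L (RatFunc.X - RatFunc.C a)) = ((1 : ℤ) : WithTop ℤ) ∧
      ν (y - algebraMap (RatFunc K) L (RatFunc.C c)) = ((n : ℤ) : WithTop ℤ) := by
  let : Algebra K L := ((algebraMap (RatFunc K) L).comp RatFunc.C).toAlgebra
  have : IsScalarTower K (RatFunc K) L := .of_algebraMap_eq' rfl
  set x : L := algebraMap (RatFunc K) L RatFunc.X
  have hconst (k : K) : algebraMap (RatFunc K) L (RatFunc.C k) = algebraMap K L k := rfl
  have hgx : algebraMap (RatFunc K) L (algebraMap K[X] (RatFunc K) g) = aeval x g := by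
    rw [← RatFunc.aeval_X_left_eq_algebraMap, aeval_algebraMap_apply]
  have hx : Transcendental K x :=
    (transcendental_algebraMap_iff (algebraMap (RatFunc K) L).injective).2 RatFunc.transcendental_X
  have hgx0 : aeval x g ≠ 0 := by
    intro h
    rw [transcendental_iff.1 hx g h, eval_zero] at hga
    exact hga rfl
  have htop : IntermediateField.adjoin K {x, y} = ⊤ := by
    simpa only [Set.image_singleton, Set.singleton_union] using
      adjoin_image_union_eq_top RatFunc.adjoin_X
        (IntermediateField.adjoin_eq_top_of_algebra _ _ hgen)
  simp only [map_div₀, map_pow, map_sub, hgx, hconst, eq_div_iff hgx0] at heq ⊢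
  refine IsTrivialOnConstants.map_sub_eq_of_mul_eq_pow (h := (X - C c) ^ q + C b) htriv hsurj htop
    hga hgdeg (by simp [hq, hb]) (fun h => hx (h ▸ isAlgebraic_algebraMap a)) hy ?_
  rw [← heq]
  simp only [map_add, map_pow, map_sub, aeval_X, aeval_C]
  ring

/-- If ν(y − a) > 0 then ν(x − a) = 1 and ν(y − a) = m: the zero Q of
y − a is unramified over P_{x−a} and totally ramified (index m = q + 1) over P_{y−a}. -/
theorem ramification_at_Q
    (K : Type*) [Field K] [IsAlgClosed K] (p : ℕ) (hp : p.Prime) [CharP K p]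
    (n : ℕ) (hn : 1 ≤ n) (q m : ℕ) (hq : q = p ^ n) (hm : m = q + 1)
    (a b : K) (hb : b ≠ 0)
    (g : Polynomial K) (hga : g.eval a ≠ 0) (hgdeg : g.natDegree < m)
    (hgcd : Nat.gcd (m - g.natDegree) m = 1)
    (L : Type*) [Field L] [Algebra (RatFunc K) L]
    (hdeg : Module.finrank (RatFunc K) L = m)
    (y : L) (hgen : Algebra.adjoin (RatFunc K) {y} = ⊤)
    (heq : (y - algebraMap (RatFunc K) L (RatFunc.C a)) ^ m
        + algebraMap (RatFunc K) L (RatFunc.C b) * (y - algebraMap (RatFunc K) L (RatFunc.C a))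
        = algebraMap (RatFunc K) L
            ((RatFunc.X - RatFunc.C a) ^ m / algebraMap (Polynomial K) (RatFunc K) g))
    (ν : AddValuation L (WithTop ℤ)) (hsurj : Function.Surjective ν)
    (htriv : ∀ c : K, c ≠ 0 → ν (algebraMap (RatFunc K) L (RatFunc.C c)) = 0)
    (hy : 0 < ν (y - algebraMap (RatFunc K) L (RatFunc.C a))) :
    ν (algebraMap (RatFunc K) L (RatFunc.X - RatFunc.C a)) = ((1 : ℤ) : WithTop ℤ) ∧
      ν (y - algebraMap (RatFunc K) L (RatFunc.C a)) = ((m : ℤ) : WithTop ℤ) := by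
  subst hm
  exact ramification_at_Q_general (hq ▸ pow_ne_zero n hp.ne_zero) hb hga hgdeg.le
    hgen heq hsurj htriv hy
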